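/- Let K ⊂ ℝ² be an o-symmetric convex body such that B² is the Löwner ellipse of K, i.e. K ⊆ B² and |det T| ≥ 1 for every invertible linear map T : ℝ² → ℝ² with K ⊆ T(B²). Then V(K) + V(K*) ≤ 2π. -/

import Mathlib

open MeasureTheory Real
open scoped Pointwise RealInnerProductSpace ENNReal

noncomputable section

abbrev E2 := EuclideanSpace ℝ (Fin 2)

/-- The polar body `K* = {y : ⟪x,y⟫ ≤ 1 for all x ∈ K}`. -/
def polarBody (K : Set E2) : Set E2 := {y | ∀ x ∈ K, ⟪x, y⟫ ≤ 1}

/-!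
Since `K ⊆ B²`, it suffices to show `V(K* \ B²) ≤ V(B² \ K)`.

If the unit ball of `ℝⁿ` is the Löwner ellipsoid of `K`, then `Id / n` is a convex combination of
the projections `u ⊗ u` at contact points `u ∈ K ∩ Sⁿ⁻¹`: otherwise a separating functional,
represented by a matrix `A`, yields a first order perturbation of the ball that still contains `K`
but has smaller volume. By Carathéodory finitely many contact points suffice, and evaluating the
decomposition at `y` shows that one of them satisfies `‖y‖ ≤ √n |⟪u, y⟫|`. In the plane this says
that every direction is within 45° of some member of a finite symmetric set `F` of contact points.

The Voronoi cell of each `u ∈ F` is cut by the line through `u` into two sectors of angle at most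
45°. In coordinates with first axis `u`, the map `y ↦ x` given by `x₂ = √(1 - y₁²)` and `⟪x, y⟫ = 1`
preserves area and maps the part of `K* \ B²` in such a sector into the part of `B² \ int K` in the
same sector: `x` is not interior to `K` because `y ∈ K*`, and the angle condition keeps it in the
sector.
-/

open Set Filter Topology

/-! ### Contact points of the Löwner ellipsoid -/

theorem convexHull_eq_image_stdSimplex {𝕜 V : Type*} [Field 𝕜] [LinearOrder 𝕜]
    [IsStrictOrderedRing 𝕜] [AddCommGroup V] [Module 𝕜 V] [FiniteDimensional 𝕜 V] (S : Set V) :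
    convexHull 𝕜 S =
      (fun p : (Fin (Module.finrank 𝕜 V + 1) → 𝕜) × (Fin (Module.finrank 𝕜 V + 1) → V) =>
        ∑ i, p.1 i • p.2 i) '' (stdSimplex 𝕜 _ ×ˢ univ.pi fun _ => S) := by
  refine Subset.antisymm (fun x hx => ?_) ?_
  · obtain ⟨ι, _, z, w, hzS, hind, hw, hw1, rfl⟩ := eq_pos_convex_span_of_mem_convexHull hx
    have hcard : Fintype.card ι ≤ Fintype.card (Fin (Module.finrank 𝕜 V + 1)) := by
      simpa using hind.card_le_finrank_succ.trans
        (Nat.succ_le_succ (Submodule.finrank_le (vectorSpan 𝕜 (range z))))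
    obtain ⟨e⟩ := Function.Embedding.nonempty_of_card_le hcard
    obtain ⟨i₀⟩ : Nonempty ι := by
      by_contra! h
      simp at hw1
    refine ⟨(Function.extend e w 0, Function.extend e z fun _ => z i₀), ⟨⟨fun j => ?_, ?_⟩,
      fun j _ => ?_⟩, ?_⟩
    · by_cases hj : ∃ i, e i = j
      · obtain ⟨i, rfl⟩ := hj
        simpa [e.injective.extend_apply] using (hw i).le
      · simp [Function.extend_apply' _ _ _ hj]
    · rw [← hw1]
      exact (Fintype.sum_of_injective e e.injective w (Function.extend e w 0)
        (Function.extend_apply' w _) fun i => (e.injective.extend_apply w 0 i).symm).symm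
    · by_cases hj : ∃ i, e i = j
      · obtain ⟨i, rfl⟩ := hj
        simpa [e.injective.extend_apply] using hzS ⟨i, rfl⟩
      · simpa [Function.extend_apply' _ _ _ hj] using hzS ⟨i₀, rfl⟩
    · exact (Fintype.sum_of_injective e e.injective _ _
        (fun j hj => by simp [Function.extend_apply' _ _ _ hj])
        fun i => by simp [e.injective.extend_apply]).symm
  · rintro _ ⟨⟨w, z⟩, ⟨hw, hz⟩, rfl⟩
    exact (convex_convexHull 𝕜 S).sum_mem (fun i _ => hw.1 i) hw.2
      fun i _ => subset_convexHull 𝕜 S (hz i trivial)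

theorem isCompact_convexHull_of_finiteDimensional {V : Type*} [AddCommGroup V] [Module ℝ V]
    [FiniteDimensional ℝ V] [TopologicalSpace V] [ContinuousAdd V] [ContinuousSMul ℝ V]
    {S : Set V} (hS : IsCompact S) : IsCompact (convexHull ℝ S) := by
  rw [convexHull_eq_image_stdSimplex]
  exact ((isCompact_stdSimplex ℝ _).prod (isCompact_univ_pi fun _ => hS)).image (by fun_prop)

theorem exists_polynomial_det_one_add_smul {R M : Type*} [CommRing R] [AddCommGroup M]
    [Module R M] [Module.Free R M] [Module.Finite R M] (f : M →ₗ[R] M) :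
    ∃ p : Polynomial R, ∀ r : R,
      LinearMap.det (1 + r • f) = 1 + LinearMap.trace R M f * r + p.eval r * r ^ 2 := by
  let b := Module.Free.chooseBasis R M
  have hdet (r : R) : LinearMap.det (1 + r • f) = (1 + r • LinearMap.toMatrix b b f).det := by
    rw [← LinearMap.det_toMatrix b, map_add, map_smul, LinearMap.toMatrix_one]
  rw [LinearMap.trace_eq_matrix_trace R b]
  exact ⟨_, fun r => (hdet r).trans (Matrix.det_one_add_smul r _)⟩

theorem eventually_one_lt_det_one_add_smul {V : Type*} [AddCommGroup V] [Module ℝ V]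
    [FiniteDimensional ℝ V] {f : V →ₗ[ℝ] V} (hf : 0 < LinearMap.trace ℝ V f) :
    ∀ᶠ ε : ℝ in 𝓝[>] 0, 1 < LinearMap.det (1 + ε • f) := by
  obtain ⟨p, hp⟩ := exists_polynomial_det_one_add_smul f
  have hslope : ∀ᶠ ε : ℝ in 𝓝 0, 0 < LinearMap.trace ℝ V f + p.eval ε * ε :=
    ContinuousAt.eventually_lt continuousAt_const (by fun_prop) (by simpa using hf)
  filter_upwards [hslope.filter_mono nhdsWithin_le_nhds, self_mem_nhdsWithin] with ε h hε
  rw [hp]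
  linarith [mul_pos hε h]

section Loewner

variable {E : Type*} [NormedAddCommGroup E] [InnerProductSpace ℝ E]

/-- The unit ball is the Löwner ellipsoid of `K`: no centred ellipsoid containing `K` has smaller
volume. Ellipsoids are encoded as the images of the unit ball under the bijective linear maps `T`,
so that volumes are compared through `|det T|`. -/
structure IsLoewnerBall (K : Set E) : Prop where
  subset_closedBall : K ⊆ Metric.closedBall 0 1
  one_le_abs_det (T : E →ₗ[ℝ] E) : Function.Bijective T →
    K ⊆ T '' Metric.closedBall 0 1 → 1 ≤ |LinearMap.det T|

theorem eventually_forall_norm_sub_smul_le_one {K : Set E} (hK : IsCompact K)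
    (hKB : K ⊆ Metric.closedBall 0 1) {A : E →L[ℝ] E}
    (hA : ∀ x ∈ K ∩ Metric.sphere 0 1, 0 < ⟪A x, x⟫) :
    ∀ᶠ ε : ℝ in 𝓝[>] 0, ∀ x ∈ K, ‖x - ε • A x‖ ≤ 1 := by
  suffices h : ∀ᶠ ε : ℝ in 𝓝 0, ∀ x ∈ K, ‖x‖ ≤ 1 → 0 < ε → ‖x - ε • A x‖ ≤ 1 by
    filter_upwards [h.filter_mono nhdsWithin_le_nhds, self_mem_nhdsWithin] with ε hε hpos x hx
    exact hε x hx (by simpa using hKB hx) hpos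
  refine hK.eventually_forall_of_forall_eventually fun x hx => ?_
  have hx1 : ‖x‖ ≤ 1 := by simpa using hKB hx
  rcases hx1.lt_or_eq with hlt | heq
  · have hcont : ContinuousAt (fun p : ℝ × E => ‖p.2 - p.1 • A p.2‖) (0, x) := by fun_prop
    filter_upwards [hcont.eventually_lt continuousAt_const (by simpa using hlt)]
      with p hp _ _ using hp.le
  · have hcont : ContinuousAt (fun p : ℝ × E => p.1 * ‖A p.2‖ ^ 2) (0, x) := by fun_prop
    have hcont' : ContinuousAt (fun p : ℝ × E => 2 * ⟪A p.2, p.2⟫) (0, x) := by fun_prop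
    filter_upwards [hcont.eventually_lt hcont' (by simpa using hA x ⟨hx, by simpa using heq⟩)]
      with ⟨ε, z⟩ hlt hz hε
    rw [← sq_le_one_iff₀ (norm_nonneg _)]
    calc ‖z - ε • A z‖ ^ 2 = ‖z‖ ^ 2 - ε * (2 * ⟪A z, z⟫ - ε * ‖A z‖ ^ 2) := by
          rw [norm_sub_sq_real, norm_smul, real_inner_smul_right, real_inner_comm, mul_pow,
            Real.norm_eq_abs, sq_abs]
          ring
      _ ≤ 1 := by
          have := mul_pos hε (sub_pos.2 hlt)
          nlinarith [norm_nonneg z]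

theorem exists_mul_norm_sq_le_inner_sq_of_smul_one_mem_convexHull {c : ℝ} {S : Set E}
    (h : c • (1 : E →L[ℝ] E) ∈ convexHull ℝ ((fun u => InnerProductSpace.rankOne ℝ u u) '' S))
    (y : E) : ∃ u ∈ S, c * ‖y‖ ^ 2 ≤ ⟪u, y⟫ ^ 2 := by
  let φ : (E →L[ℝ] E) →ₗ[ℝ] ℝ :=
    (innerₛₗ ℝ y).comp (ContinuousLinearMap.apply ℝ E y).toLinearMap
  obtain ⟨_, ⟨u, hu, rfl⟩, hle⟩ :=
    (φ.convexOn (convex_convexHull ℝ _)).exists_ge_of_mem_convexHull (subset_convexHull ℝ _) h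
  exact ⟨u, hu, by simpa [φ, real_inner_smul_right, ← sq, real_inner_comm] using hle⟩

variable [FiniteDimensional ℝ E]

theorem IsLoewnerBall.trace_nonneg {K : Set E} (hL : IsLoewnerBall K) (hK : IsCompact K)
    {A : E →L[ℝ] E} (hA : ∀ x ∈ K ∩ Metric.sphere 0 1, 0 < ⟪A x, x⟫) :
    0 ≤ LinearMap.trace ℝ E A := by
  by_contra! htr
  -- For small `ε > 0` the inverse of `1 - ε A` maps the ball to a smaller ellipsoid containing `K`.
  have hdet : ∀ᶠ ε : ℝ in 𝓝[>] 0, 1 < LinearMap.det (1 + ε • (-A : E →ₗ[ℝ] E)) :=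
    eventually_one_lt_det_one_add_smul (by simpa using htr)
  obtain ⟨ε, hε, hmaps⟩ :=
    (hdet.and (eventually_forall_norm_sub_smul_le_one hK hL.subset_closedBall hA)).exists
  set S : E →ₗ[ℝ] E := 1 + ε • (-A : E →ₗ[ℝ] E)
  let T := LinearEquiv.ofIsUnitDet (f := S)
    (v := Module.finBasis ℝ E) (v' := Module.finBasis ℝ E)
    (by rw [LinearMap.det_toMatrix]; exact (zero_lt_one.trans hε).ne'.isUnit)
  have hcover : K ⊆ T.symm '' Metric.closedBall 0 1 := fun x hx =>
    ⟨T x, by simpa [T, S, sub_eq_add_neg] using hmaps x hx, T.symm_apply_apply x⟩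
  have h1 := hL.one_le_abs_det T.symm T.symm.bijective hcover
  have h2 : LinearMap.det (T.symm : E →ₗ[ℝ] E) * LinearMap.det S = 1 := T.det_symm_mul_det
  have h3 : |LinearMap.det (T.symm : E →ₗ[ℝ] E)| * |LinearMap.det S| = 1 := by
    rw [← abs_mul, h2, abs_one]
  rw [abs_of_pos (a := LinearMap.det S) (by linarith)] at h3
  nlinarith

theorem exists_inner_eq_rankOne_and_trace_eq (f : (E →L[ℝ] E) →L[ℝ] ℝ) :
    ∃ A : E →L[ℝ] E, (∀ u, ⟪A u, u⟫ = f (InnerProductSpace.rankOne ℝ u u)) ∧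
      LinearMap.trace ℝ E A = f 1 := by
  let A : E →L[ℝ] E := InnerProductSpace.continuousLinearMapOfBilin
    ((ContinuousLinearMap.postcomp E f).comp (InnerProductSpace.rankOne ℝ).flip)
  have hA (u : E) : ⟪A u, u⟫ = f (InnerProductSpace.rankOne ℝ u u) :=
    InnerProductSpace.continuousLinearMapOfBilin_apply _ _ _
  refine ⟨A, hA, ?_⟩
  let b := stdOrthonormalBasis ℝ E
  calc LinearMap.trace ℝ E A = ∑ i, ⟪A (b i), b i⟫ := by
        simp_rw [real_inner_comm]
        exact LinearMap.trace_eq_sum_inner _ b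
    _ = f (∑ i, InnerProductSpace.rankOne ℝ (b i) (b i)) := by simp_rw [hA, map_sum]
    _ = f 1 := by rw [b.sum_rankOne_eq_id]; rfl

theorem IsLoewnerBall.smul_one_mem_convexHull [Nontrivial E] {K : Set E} (hL : IsLoewnerBall K)
    (hK : IsCompact K) :
    (Module.finrank ℝ E : ℝ)⁻¹ • (1 : E →L[ℝ] E) ∈
      convexHull ℝ ((fun u => InnerProductSpace.rankOne ℝ u u) '' (K ∩ Metric.sphere 0 1)) := by
  have hn : (0 : ℝ) < Module.finrank ℝ E := by exact_mod_cast Module.finrank_pos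
  have hcont : Continuous fun u : E => InnerProductSpace.rankOne ℝ u u :=
    (InnerProductSpace.rankOne ℝ).continuous.clm_apply continuous_id
  have hcomp := isCompact_convexHull_of_finiteDimensional
    ((hK.inter_right (Metric.isClosed_sphere (x := 0) (ε := 1))).image hcont)
  by_contra hmem
  obtain ⟨f, c, hfc, hcf⟩ :=
    geometric_hahn_banach_point_closed (convex_convexHull ℝ _) hcomp.isClosed hmem
  obtain ⟨A, hA, htr⟩ := exists_inner_eq_rankOne_and_trace_eq f
  have hpos : ∀ u ∈ K ∩ Metric.sphere 0 1, 0 < ⟪(A - c • (1 : E →L[ℝ] E)) u, u⟫ := by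
    intro u hu
    have h : c < f (InnerProductSpace.rankOne ℝ u u) :=
      hcf _ (subset_convexHull ℝ _ (mem_image_of_mem _ hu))
    simpa [inner_sub_left, real_inner_smul_left, hA, show ‖u‖ = 1 by simpa using hu.2] using h
  have hneg : LinearMap.trace ℝ E (A - c • (1 : E →L[ℝ] E) : E →L[ℝ] E) < 0 := by
    rw [map_smul, smul_eq_mul, inv_mul_lt_iff₀ hn] at hfc
    have h1 : LinearMap.trace ℝ E ((1 : E →L[ℝ] E) : E →ₗ[ℝ] E) = Module.finrank ℝ E :=
      LinearMap.trace_one ℝ E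
    rw [ContinuousLinearMap.toLinearMap_sub, ContinuousLinearMap.toLinearMap_smul, map_sub,
      map_smul, htr, h1, smul_eq_mul]
    linarith
  exact hneg.not_ge (hL.trace_nonneg hK hpos)

theorem IsLoewnerBall.exists_finset_norm_le_sqrt_mul_inner [Nontrivial E] {K : Set E}
    (hL : IsLoewnerBall K) (hK : IsCompact K) (hsymm : K = -K) :
    ∃ F : Finset E, ↑F ⊆ K ∩ Metric.sphere 0 1 ∧
      ∀ y, ∃ u ∈ F, ‖y‖ ≤ √(Module.finrank ℝ E) * ⟪u, y⟫ := by
  classical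
  have hmem := hL.smul_one_mem_convexHull hK
  rw [convexHull_eq_union_convexHull_finite_subsets] at hmem
  simp only [mem_iUnion] at hmem
  obtain ⟨t, ht, hmem⟩ := hmem
  obtain ⟨F, hF, rfl⟩ := Finset.subset_set_image_iff.1 ht
  rw [Finset.coe_image] at hmem
  refine ⟨F ∪ -F, fun u hu => ?_, fun y => ?_⟩
  · rcases Finset.mem_union.1 hu with h | h
    · exact hF h
    · obtain ⟨hK', hS⟩ := hF (Finset.mem_neg'.1 h)
      exact ⟨hsymm ▸ hK', by simpa using hS⟩
  · obtain ⟨u, hu, hle⟩ := exists_mul_norm_sq_le_inner_sq_of_smul_one_mem_convexHull hmem y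
    have hnorm : ‖y‖ ≤ √(Module.finrank ℝ E) * |⟪u, y⟫| := by
      rw [← Real.sqrt_sq_eq_abs, ← Real.sqrt_mul (Nat.cast_nonneg _)]
      exact Real.le_sqrt_of_sq_le
        ((inv_mul_le_iff₀ (by exact_mod_cast Module.finrank_pos)).1 hle)
    rcases abs_choice ⟪u, y⟫ with h | h <;> rw [h] at hnorm
    · exact ⟨u, Finset.mem_union_left _ hu, hnorm⟩
    · exact ⟨-u, Finset.mem_union_right _ (Finset.neg_mem_neg hu), by rwa [inner_neg_left]⟩

end Loewner

/-! ### The area-preserving map -/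

section Shear

/-- The open sector between the positive first axis and the ray of slope `σ` in the half-plane
`x > 0`. It is used for `σ > 0` only; otherwise it does not meet that half-plane. -/
def sector (σ : ℝ) : Set (ℝ × ℝ) := {p | 0 < p.2 ∧ p.2 < σ * p.1}

theorem isOpen_sector (σ : ℝ) : IsOpen (sector σ) :=
  (isOpen_lt continuous_const continuous_snd).inter (isOpen_lt continuous_snd (by fun_prop))

/-- The area-preserving map from the part of the polar body outside the disk to the part of the
disk outside the body: `y = (y₁, y₂)` is sent to the point at height `√(1 - y₁²)` on the line
`{x | ⟪x, y⟫ = 1}`. It is meant for `0 < y₁ < 1`. -/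
def shearMap (p : ℝ × ℝ) : ℝ × ℝ := ((1 - √(1 - p.1 ^ 2) * p.2) / p.1, √(1 - p.1 ^ 2))

theorem sqrt_one_sub_sq_pos {t : ℝ} (h0 : 0 < t) (h1 : t < 1) : 0 < √(1 - t ^ 2) :=
  Real.sqrt_pos.2 (by nlinarith)

theorem sqrt_one_sub_sq_lt {s t : ℝ} (hs : 0 < s) (h : 1 < t ^ 2 + s ^ 2) : √(1 - t ^ 2) < s :=
  (Real.sqrt_lt' hs).2 (by linarith)

theorem hasDerivAt_sqrt_one_sub_sq {t : ℝ} (h0 : 0 < t) (h1 : t < 1) :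
    HasDerivAt (fun t : ℝ => √(1 - t ^ 2)) (-t / √(1 - t ^ 2)) t := by
  convert! ((hasDerivAt_pow 2 t).const_sub 1).sqrt (by nlinarith : 1 - t ^ 2 ≠ 0) using 1
  field_simp
  ring

theorem exists_hasFDerivAt_shearMap {p : ℝ × ℝ} (h0 : 0 < p.1) (h1 : p.1 < 1) :
    ∃ L : ℝ × ℝ →L[ℝ] ℝ × ℝ, HasFDerivAt shearMap L p ∧ L.det = -1 := by
  have hs := sqrt_one_sub_sq_pos h0 h1
  have hinv : HasFDerivAt (fun q : ℝ × ℝ => q.1⁻¹)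
      ((-(p.1 ^ 2)⁻¹) • ContinuousLinearMap.fst ℝ ℝ ℝ) p :=
    (hasDerivAt_inv h0.ne').comp_hasFDerivAt p hasFDerivAt_fst
  have hsqrt : HasFDerivAt (fun q : ℝ × ℝ => √(1 - q.1 ^ 2))
      ((-p.1 / √(1 - p.1 ^ 2)) • ContinuousLinearMap.fst ℝ ℝ ℝ) p :=
    (hasDerivAt_sqrt_one_sub_sq h0 h1).comp_hasFDerivAt p hasFDerivAt_fst
  have hquot : HasFDerivAt (fun q : ℝ × ℝ => (1 - √(1 - q.1 ^ 2) * q.2) * q.1⁻¹) _ p :=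
    ((hsqrt.mul hasFDerivAt_snd).const_sub 1).mul hinv
  have hdet : p.1⁻¹ * √(1 - p.1 ^ 2) * (-p.1 / √(1 - p.1 ^ 2)) = -1 := by field_simp
  refine ⟨_, hquot.prodMk hsqrt, ?_⟩
  rw [ContinuousLinearMap.det, ← LinearMap.det_toMatrix (.finTwoProd ℝ), Matrix.det_fin_two]
  simpa [LinearMap.toMatrix_apply] using hdet

theorem injOn_shearMap : InjOn shearMap {p | 0 < p.1 ∧ p.1 < 1} := by
  rintro ⟨y₁, y₂⟩ ⟨hy0, hy1⟩ ⟨z₁, z₂⟩ ⟨hz0, hz1⟩ h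
  obtain ⟨hfst, hsnd⟩ := Prod.mk.inj h
  dsimp only at *
  obtain rfl : y₁ = z₁ := by
    rw [Real.sqrt_inj (by nlinarith) (by nlinarith)] at hsnd
    nlinarith
  rw [div_left_inj' hy0.ne', sub_right_inj,
    mul_right_inj' (sqrt_one_sub_sq_pos hy0 hy1).ne'] at hfst
  rw [hfst]

theorem volume_image_shearMap {A : Set (ℝ × ℝ)} (hA : MeasurableSet A)
    (hsub : A ⊆ {p | 0 < p.1 ∧ p.1 < 1}) : volume (shearMap '' A) = volume A := by
  choose! L hL hdet using fun p (hp : p ∈ A) =>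
    exists_hasFDerivAt_shearMap (hsub hp).1 (hsub hp).2
  rw [← lintegral_abs_det_fderiv_eq_addHaar_image volume hA
    (fun p hp => (hL p hp).hasFDerivWithinAt) (injOn_shearMap.mono hsub),
    setLIntegral_congr_fun hA (g := fun _ => 1) fun p hp => by simp [hdet p hp]]
  simp

theorem fst_mul_shearMap_fst_add_snd_mul_shearMap_snd {p : ℝ × ℝ} (hp : p.1 ≠ 0) :
    p.1 * (shearMap p).1 + p.2 * (shearMap p).2 = 1 := by
  simp only [shearMap]
  field_simp
  ring

variable {σ : ℝ} {p : ℝ × ℝ}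

theorem fst_pos_of_mem_sector (hσ : 0 < σ) (hp : p ∈ sector σ) : 0 < p.1 :=
  pos_of_mul_pos_right (hp.1.trans hp.2) hσ.le

theorem shearMap_mem_sector (hσ : σ ∈ Ioc 0 1) (hp : p ∈ sector σ) (h1 : p.1 < 1)
    (hout : 1 < p.1 ^ 2 + p.2 ^ 2) : shearMap p ∈ sector σ := by
  obtain ⟨hσ0, hσ1⟩ := hσ
  have h0 := fst_pos_of_mem_sector hσ0 hp
  have hs := sqrt_one_sub_sq_pos h0 h1
  have hsp := sqrt_one_sub_sq_lt hp.1 hout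
  have hsq : √(1 - p.1 ^ 2) ^ 2 = 1 - p.1 ^ 2 := Real.sq_sqrt (by nlinarith)
  refine ⟨hs, ?_⟩
  simp only [shearMap]
  set s := √(1 - p.1 ^ 2)
  obtain ⟨y₁, y₂⟩ := p
  obtain ⟨-, hyσ⟩ := hp
  dsimp only at *
  have hslope : s < σ * y₁ := hsp.trans hyσ
  have hslope' : σ * s < y₁ := by nlinarith
  have hprod : 0 < (y₁ - σ * s) * (σ * y₁ - s) := mul_pos (sub_pos.2 hslope') (sub_pos.2 hslope)
  rw [mul_div_assoc', lt_div_iff₀ h0]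
  calc s * y₁ < σ * (1 - s * (σ * y₁)) := by linear_combination hprod + σ * hsq
    _ ≤ σ * (1 - s * y₂) := by gcongr

theorem shearMap_fst_sq_add_snd_sq_le_one (hσ : σ ∈ Ioc 0 1) (hp : p ∈ sector σ) (h1 : p.1 < 1)
    (hout : 1 < p.1 ^ 2 + p.2 ^ 2) : (shearMap p).1 ^ 2 + (shearMap p).2 ^ 2 ≤ 1 := by
  have h0 := fst_pos_of_mem_sector hσ.1 hp
  have hsq : √(1 - p.1 ^ 2) ^ 2 = 1 - p.1 ^ 2 := Real.sq_sqrt (by nlinarith)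
  have hpos : 0 < (shearMap p).1 := fst_pos_of_mem_sector hσ.1 (shearMap_mem_sector hσ hp h1 hout)
  have hle : (shearMap p).1 ≤ p.1 := by
    rw [shearMap, div_le_iff₀ h0]
    nlinarith [sqrt_one_sub_sq_lt hp.1 hout, sqrt_one_sub_sq_pos h0 h1]
  calc (shearMap p).1 ^ 2 + (shearMap p).2 ^ 2 ≤ p.1 ^ 2 + (1 - p.1 ^ 2) := by
        gcongr
        exact hsq.le
    _ = 1 := by ring

end Shear

/-! ### Voronoi half-cells -/

section Plane

variable {E : Type*} [NormedAddCommGroup E] [InnerProductSpace ℝ E]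
  (b : OrthonormalBasis (Fin 2) ℝ E)

theorem inner_eq_two_coords (x y : E) :
    ⟪x, y⟫ = ⟪b 0, x⟫ * ⟪b 0, y⟫ + ⟪b 1, x⟫ * ⟪b 1, y⟫ := by
  simp [← b.sum_inner_mul_inner x y, real_inner_comm x]

theorem norm_sq_eq_two_coords (x : E) : ‖x‖ ^ 2 = ⟪b 0, x⟫ ^ 2 + ⟪b 1, x⟫ ^ 2 := by
  simp [← b.sum_sq_inner_right x]

/-- The coordinates of the plane `E` in the orthonormal basis `b`, valued in `ℝ × ℝ`. -/
def planeCoords [MeasurableSpace E] [BorelSpace E] : E ≃ᵐ ℝ × ℝ :=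
  (b.measurableEquiv.trans (MeasurableEquiv.toLp 2 (Fin 2 → ℝ)).symm).trans
    MeasurableEquiv.finTwoArrow

theorem planeCoords_apply [MeasurableSpace E] [BorelSpace E] (y : E) :
    planeCoords b y = (⟪b 0, y⟫, ⟪b 1, y⟫) := by
  rw [← b.repr_apply_apply, ← b.repr_apply_apply]
  rfl

theorem measurePreserving_planeCoords [FiniteDimensional ℝ E] [MeasurableSpace E] [BorelSpace E] :
    MeasurePreserving (planeCoords b) :=
  ((volume_preserving_finTwoArrow ℝ).comp
    (EuclideanSpace.volume_preserving_symm_measurableEquiv_toLp _)).comp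
      b.measurePreserving_measurableEquiv

/-- The half-cell of `b 0` in the Voronoi diagram of `F`: the points whose inner product with `b 0`
exceeds that with any other member of `F`, on the side of the line through `b 0` to which `b 1`
points. For unit vectors a larger inner product means a smaller distance. -/
def halfCell (F : Finset E) (b : OrthonormalBasis (Fin 2) ℝ E) : Set E :=
  {y | 0 < ⟪b 1, y⟫ ∧ ∀ u ∈ F, u ≠ b 0 → ⟪u, y⟫ < ⟪b 0, y⟫}

/-- The slope, in the coordinates of `b`, of the bisector of `b 0` and a unit vector `u`. It is
meant for `0 < ⟪b 1, u⟫`. -/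
def bisectorSlope (u : E) : ℝ := (1 - ⟪b 0, u⟫) / ⟪b 1, u⟫

variable {b}

theorem inner_lt_inner_iff_lt_bisectorSlope_mul {u y : E} (hu : 0 < ⟪b 1, u⟫) :
    ⟪u, y⟫ < ⟪b 0, y⟫ ↔ ⟪b 1, y⟫ < bisectorSlope b u * ⟪b 0, y⟫ := by
  rw [inner_eq_two_coords b u, bisectorSlope, div_mul_eq_mul_div, lt_div_iff₀ hu]
  constructor <;> intro h <;> linarith

variable {F : Finset E}

theorem inner_basis_zero_lt_one {u : E} (hu : ‖u‖ = 1) (hne : u ≠ b 0) : ⟪b 0, u⟫ < 1 :=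
  (inner_lt_one_iff_real_of_norm_eq_one (b.norm_eq_one 0) hu).2 hne.symm

theorem ne_basis_zero_of_inner_pos {u : E} (h : 0 < ⟪b 1, u⟫) : u ≠ b 0 := by
  rintro rfl
  simp at h

theorem bisectorSlope_pos {u : E} (hu : ‖u‖ = 1) (h : 0 < ⟪b 1, u⟫) : 0 < bisectorSlope b u :=
  div_pos (sub_pos.2 (inner_basis_zero_lt_one hu (ne_basis_zero_of_inner_pos h))) h

theorem exists_isLeast_bisectorSlope (hgap : ∀ y, ∃ u ∈ F, ‖y‖ ≤ √2 * ⟪u, y⟫) :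
    ∃ σ, IsLeast (bisectorSlope b '' {u | u ∈ F ∧ 0 < ⟪b 1, u⟫}) σ := by
  obtain ⟨u, hu, hle⟩ := hgap (b 1)
  have hpos : 0 < ⟪b 1, u⟫ := by
    rw [b.norm_eq_one, real_inner_comm] at hle
    exact pos_of_mul_pos_right (one_pos.trans_le hle) (Real.sqrt_nonneg 2)
  have hfin : {u | u ∈ F ∧ 0 < ⟪b 1, u⟫}.Finite := F.finite_toSet.subset fun _ h => h.1
  exact (hfin.image (bisectorSlope b)).isCompact.exists_isLeast ⟨_, mem_image_of_mem _ ⟨hu, hpos⟩⟩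

theorem halfCell_eq_preimage_sector (hF : ∀ u ∈ F, ‖u‖ = 1) {σ : ℝ}
    (hσ : IsLeast (bisectorSlope b '' {u | u ∈ F ∧ 0 < ⟪b 1, u⟫}) σ) :
    halfCell F b = (fun y => (⟪b 0, y⟫, ⟪b 1, y⟫)) ⁻¹' sector σ := by
  obtain ⟨⟨v, ⟨hv, hvpos⟩, rfl⟩, hmin⟩ := hσ
  ext y
  refine ⟨fun ⟨hy, hcell⟩ => ⟨hy, ?_⟩, fun hy => ⟨hy.1, fun u hu hne => ?_⟩⟩
  · exact (inner_lt_inner_iff_lt_bisectorSlope_mul hvpos).1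
      (hcell v hv (ne_basis_zero_of_inner_pos hvpos))
  · have hy0 : 0 < ⟪b 0, y⟫ := fst_pos_of_mem_sector (bisectorSlope_pos (hF v hv) hvpos) hy
    rcases le_or_gt ⟪b 1, u⟫ 0 with hneg | hpos
    · rw [inner_eq_two_coords b u]
      nlinarith [inner_basis_zero_lt_one (hF u hu) hne, hy.1]
    · rw [inner_lt_inner_iff_lt_bisectorSlope_mul hpos]
      have := hmin (mem_image_of_mem _ ⟨hu, hpos⟩)
      exact hy.2.trans_le (by gcongr)

theorem mem_Ioc_of_isLeast_bisectorSlope (hF : ∀ u ∈ F, ‖u‖ = 1)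
    (hgap : ∀ y, ∃ u ∈ F, ‖y‖ ≤ √2 * ⟪u, y⟫) {σ : ℝ}
    (hσ : IsLeast (bisectorSlope b '' {u | u ∈ F ∧ 0 < ⟪b 1, u⟫}) σ) : σ ∈ Ioc 0 1 := by
  have hpos : 0 < σ := by
    obtain ⟨v, ⟨hv, hvpos⟩, rfl⟩ := hσ.1
    exact bisectorSlope_pos (hF v hv) hvpos
  refine ⟨hpos, ?_⟩
  -- `b 0 + σ • b 1` is on the boundary of the half-cell, so `hgap` there reads `√(1 + σ²) ≤ √2`.
  obtain ⟨u, hu, hle⟩ := hgap (b 0 + σ • b 1)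
  have hinner : ⟪u, b 0 + σ • b 1⟫ ≤ 1 := by
    rw [inner_add_right, real_inner_smul_right, real_inner_comm, real_inner_comm (b 1)]
    rcases le_or_gt ⟪b 1, u⟫ 0 with hneg | hpos'
    · have := real_inner_le_norm (b 0) u
      rw [b.norm_eq_one, hF u hu] at this
      nlinarith
    · have := hσ.2 (mem_image_of_mem _ ⟨hu, hpos'⟩)
      rw [bisectorSlope, le_div_iff₀ hpos'] at this
      linarith
  have hnorm : ‖b 0 + σ • b 1‖ ^ 2 = 1 + σ ^ 2 := by
    simp [norm_sq_eq_two_coords b, inner_add_right, real_inner_smul_right, b.inner_eq_ite]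
  have : 1 + σ ^ 2 ≤ 2 := by
    calc 1 + σ ^ 2 = ‖b 0 + σ • b 1‖ ^ 2 := hnorm.symm
      _ ≤ (√2 * 1) ^ 2 := by gcongr; exact hle.trans (by gcongr)
      _ = 2 := by norm_num
  nlinarith

theorem exists_halfCell_eq_preimage_sector [MeasurableSpace E] [BorelSpace E]
    (b : OrthonormalBasis (Fin 2) ℝ E) (hF : ∀ u ∈ F, ‖u‖ = 1)
    (hgap : ∀ y, ∃ u ∈ F, ‖y‖ ≤ √2 * ⟪u, y⟫) :
    ∃ σ ∈ Ioc 0 1, halfCell F b = planeCoords b ⁻¹' sector σ := by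
  obtain ⟨σ, hσ⟩ := exists_isLeast_bisectorSlope (b := b) hgap
  refine ⟨σ, mem_Ioc_of_isLeast_bisectorSlope hF hgap hσ, ?_⟩
  rw [halfCell_eq_preimage_sector hF hσ]
  simp only [← planeCoords_apply]

theorem ae_inner_ne [FiniteDimensional ℝ E] [MeasurableSpace E] [BorelSpace E]
    {w : E} (hw : w ≠ 0) (c : ℝ) : ∀ᵐ y : E, ⟪w, y⟫ ≠ c := by
  have hsurj : Function.Surjective (innerₛₗ ℝ w) :=
    LinearMap.surjective fun h => hw (by simpa using LinearMap.congr_fun h w)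
  exact (ae_comp_linearMap_mem_iff (innerₛₗ ℝ w) volume volume hsurj
    (measurableSet_singleton c).compl).2 (compl_mem_ae_iff.2 (measure_singleton c))

theorem exists_opposite_orthonormalBases [Fact (Module.finrank ℝ E = 2)] {u : E} (hu : ‖u‖ = 1) :
    ∃ b : Bool → OrthonormalBasis (Fin 2) ℝ E, (∀ ε, b ε 0 = u) ∧ b false 1 = -b true 1 := by
  have : FiniteDimensional ℝ E := .of_fact_finrank_eq_two
  have hon : Orthonormal ℝ (({0} : Set (Fin 2)).domRestrict fun _ => u) :=
    orthonormal_subsingleton_iff.2 fun _ => hu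
  obtain ⟨b, hb⟩ := hon.exists_orthonormalBasis_extension_of_card_eq (by simp [Fact.out])
  have hb0 : b 0 = u := hb 0 rfl
  have hmem : b 1 ∈ (ℝ ∙ u)ᗮ := by
    rw [Submodule.mem_orthogonal_singleton_iff_inner_right, ← hb0]
    simp
  refine ⟨fun ε => cond ε b (b.map (ℝ ∙ u).reflection), ?_, ?_⟩
  · rintro (_ | _)
    · simpa [hb0] using
        Submodule.reflection_mem_subspace_eq_self (Submodule.mem_span_singleton_self u)
    · exact hb0
  · simpa using Submodule.reflection_mem_subspace_orthogonalComplement_eq_neg hmem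

theorem pairwise_disjoint_halfCell {b : F → Bool → OrthonormalBasis (Fin 2) ℝ E}
    (hb0 : ∀ u ε, b u ε 0 = u) (hb1 : ∀ u, b u false 1 = -b u true 1) :
    Pairwise (Function.onFun Disjoint fun i : F × Bool => halfCell F (b i.1 i.2)) := by
  rintro ⟨u, ε⟩ ⟨v, δ⟩ hne
  refine disjoint_left.2 fun y ⟨hu, hu'⟩ ⟨hv, hv'⟩ => ?_
  dsimp only at *
  simp only [hb0] at hu' hv'
  obtain rfl | huv := eq_or_ne u v
  · have hside : ⟪b u false 1, y⟫ = -⟪b u true 1, y⟫ := by rw [hb1, inner_neg_left]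
    cases ε <;> cases δ <;> first | exact hne rfl | linarith
  · have hvu : (v : E) ≠ u := fun h => huv (Subtype.ext h.symm)
    exact (hu' v v.2 hvu).asymm (hv' u u.2 hvu.symm)

theorem ae_mem_iUnion_halfCell [FiniteDimensional ℝ E] [MeasurableSpace E] [BorelSpace E]
    (hF : F.Nonempty) {b : F → Bool → OrthonormalBasis (Fin 2) ℝ E}
    (hb0 : ∀ u ε, b u ε 0 = u) (hb1 : ∀ u, b u false 1 = -b u true 1) :
    ∀ᵐ y : E, y ∈ ⋃ i : F × Bool, halfCell F (b i.1 i.2) := by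
  have hside : ∀ᵐ y : E, ∀ u, ⟪b u true 1, y⟫ ≠ 0 :=
    ae_all_iff.2 fun u => ae_inner_ne ((b u true).orthonormal.ne_zero 1) 0
  have hinj : ∀ᵐ y : E, ∀ u v : F, u ≠ v → ⟪(u : E) - v, y⟫ ≠ 0 := by
    simp only [ae_all_iff]
    exact fun u v huv => ae_inner_ne (sub_ne_zero.2 (Subtype.coe_injective.ne huv)) 0
  filter_upwards [hside, hinj] with y hside hinj
  obtain ⟨u, hu, hmax⟩ := F.exists_max_image (fun u => ⟪u, y⟫) hF
  have hlt : ∀ v ∈ F, v ≠ u → ⟪v, y⟫ < ⟪u, y⟫ := fun v hv hvu =>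
    (hmax v hv).lt_of_ne fun h => hinj ⟨v, hv⟩ ⟨u, hu⟩ (fun h => hvu (congrArg Subtype.val h))
      (by rw [inner_sub_left, h, sub_self])
  obtain ⟨ε, hε⟩ : ∃ ε, 0 < ⟪b ⟨u, hu⟩ ε 1, y⟫ := by
    rcases (hside ⟨u, hu⟩).lt_or_gt with h | h
    · exact ⟨false, by rwa [hb1, inner_neg_left, neg_pos]⟩
    · exact ⟨true, h⟩
  exact mem_iUnion.2 ⟨(⟨u, hu⟩, ε), hε, by simpa only [hb0] using hlt⟩

end Plane

/-! ### Comparison of areas -/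

theorem measure_le_of_forall_inter_le {α ι : Type*} [Countable ι] [MeasurableSpace α]
    {μ : Measure α} {c : ι → Set α} (hc : ∀ i, MeasurableSet (c i))
    (hdisj : Pairwise (Function.onFun Disjoint c)) (hcover : ∀ᵐ x ∂μ, x ∈ ⋃ i, c i) {s t : Set α}
    (hle : ∀ i, μ (s ∩ c i) ≤ μ (t ∩ c i)) : μ s ≤ μ t := by
  have hsum (r : Set α) : μ r = ∑' i, μ (r ∩ c i) := by
    calc μ r = μ.restrict (⋃ i, c i) r := by rw [Measure.restrict_eq_self_of_ae_mem hcover]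
      _ = ∑' i, μ (r ∩ c i) := by
        rw [Measure.restrict_iUnion hdisj hc, Measure.sum_apply_of_countable]
        simp_rw [Measure.restrict_apply' (hc _)]
  rw [hsum s, hsum t]
  exact ENNReal.tsum_le_tsum hle

theorem isClosed_polarBody (K : Set E2) : IsClosed (polarBody K) := by
  simp only [polarBody, ofPred_forall]
  exact isClosed_biInter fun x _ => isClosed_le (by fun_prop) continuous_const

theorem notMem_interior_of_inner_eq_one {K : Set E2} {x y : E2} (hy : y ∈ polarBody K)
    (hxy : ⟪x, y⟫ = 1) : x ∉ interior K := by
  intro hx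
  have hev : ∀ᶠ t : ℝ in 𝓝 1, t • x ∈ K :=
    (continuous_id.smul continuous_const).continuousAt.eventually_mem
      (mem_interior_iff_mem_nhds.1 (by simpa using hx))
  obtain ⟨t, ht, h1⟩ :=
    ((hev.filter_mono nhdsWithin_le_nhds).and (self_mem_nhdsWithin (s := Ioi 1))).exists
  have hle := hy _ ht
  rw [real_inner_smul_left, hxy, mul_one] at hle
  exact hle.not_gt h1

theorem mem_closedBall_diff_interior_of_eq_shearMap {K : Set E2}
    {b : OrthonormalBasis (Fin 2) ℝ E2} {σ : ℝ} (hσ : σ ∈ Ioc 0 1) {x y : E2}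
    (hy : y ∈ polarBody K \ Metric.closedBall 0 1) (hsec : planeCoords b y ∈ sector σ)
    (h1 : (planeCoords b y).1 < 1) (hx : planeCoords b x = shearMap (planeCoords b y)) :
    x ∈ (Metric.closedBall 0 1 \ interior K) ∩ planeCoords b ⁻¹' sector σ := by
  have h0 := fst_pos_of_mem_sector hσ.1 hsec
  have hout : 1 < (planeCoords b y).1 ^ 2 + (planeCoords b y).2 ^ 2 := by
    rw [planeCoords_apply, ← norm_sq_eq_two_coords, one_lt_sq_iff₀ (norm_nonneg y)]
    simpa using hy.2
  refine ⟨⟨?_, ?_⟩, ?_⟩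
  · have hle := shearMap_fst_sq_add_snd_sq_le_one hσ hsec h1 hout
    rw [← hx, planeCoords_apply, ← norm_sq_eq_two_coords, sq_le_one_iff₀ (norm_nonneg x)] at hle
    simpa using hle
  · have hinner := fst_mul_shearMap_fst_add_snd_mul_shearMap_snd h0.ne'
    rw [← hx, planeCoords_apply, planeCoords_apply, ← inner_eq_two_coords,
      real_inner_comm] at hinner
    exact notMem_interior_of_inner_eq_one hy.1 hinner
  · rw [mem_preimage, hx]
    exact shearMap_mem_sector hσ hsec h1 hout

theorem volume_polarBody_diff_inter_sector_le {K : Set E2} {b : OrthonormalBasis (Fin 2) ℝ E2}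
    (hb : b 0 ∈ K) {σ : ℝ} (hσ : σ ∈ Ioc 0 1) :
    volume ((polarBody K \ Metric.closedBall 0 1) ∩ planeCoords b ⁻¹' sector σ) ≤
      volume ((Metric.closedBall 0 1 \ interior K) ∩ planeCoords b ⁻¹' sector σ) := by
  set e := planeCoords b
  have he (y : E2) : (e y).1 = ⟪b 0, y⟫ := by rw [planeCoords_apply]
  set D := (polarBody K \ Metric.closedBall 0 1) ∩ e ⁻¹' sector σ
  set D' := (Metric.closedBall 0 1 \ interior K) ∩ e ⁻¹' sector σ
  have hD : MeasurableSet D :=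
    ((isClosed_polarBody K).measurableSet.diff Metric.isClosed_closedBall.measurableSet).inter
      (e.measurable (isOpen_sector σ).measurableSet)
  set A := D ∩ {y | (e y).1 < 1}
  have hA : MeasurableSet A :=
    hD.inter (measurableSet_lt (measurable_fst.comp e.measurable) measurable_const)
  have hDA : D =ᵐ[volume] A := by
    filter_upwards [ae_inner_ne (b.orthonormal.ne_zero 0) 1] with y hy
    refine propext ⟨fun hyD => ⟨hyD, ?_⟩, fun hyA => hyA.1⟩
    exact lt_of_le_of_ne (he y ▸ hyD.1.1 _ hb) (he y ▸ hy)
  have hstrip : e.symm ⁻¹' A ⊆ {p | 0 < p.1 ∧ p.1 < 1} := by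
    rintro p ⟨⟨-, hsec⟩, h1⟩
    simp only [mem_preimage, mem_ofPred_eq, e.apply_symm_apply] at hsec h1
    exact ⟨fst_pos_of_mem_sector hσ.1 hsec, h1⟩
  have hmaps : shearMap '' (e.symm ⁻¹' A) ⊆ e.symm ⁻¹' D' := by
    rintro _ ⟨p, ⟨⟨hp, hsec⟩, h1⟩, rfl⟩
    refine mem_closedBall_diff_interior_of_eq_shearMap hσ hp hsec h1 ?_
    simp only [e, MeasurableEquiv.apply_symm_apply]
  have hpres := (measurePreserving_planeCoords b).symm
  calc volume D = volume A := measure_congr hDA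
    _ = volume (e.symm ⁻¹' A) := (hpres.measure_preimage_equiv A).symm
    _ = volume (shearMap '' (e.symm ⁻¹' A)) :=
        (volume_image_shearMap (e.symm.measurable hA) hstrip).symm
    _ ≤ volume (e.symm ⁻¹' D') := measure_mono hmaps
    _ = volume D' := hpres.measure_preimage_equiv D'

theorem volume_polarBody_diff_closedBall_le {K : Set E2} {F : Finset E2}
    (hF : ↑F ⊆ K ∩ Metric.sphere 0 1) (hgap : ∀ y, ∃ u ∈ F, ‖y‖ ≤ √2 * ⟪u, y⟫) :
    volume (polarBody K \ Metric.closedBall 0 1) ≤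
      volume (Metric.closedBall 0 1 \ interior K) := by
  have hunit : ∀ u ∈ F, ‖u‖ = 1 := fun u hu => by simpa using (hF hu).2
  have hne : F.Nonempty := (hgap 0).imp fun _ h => h.1
  have : Fact (Module.finrank ℝ E2 = 2) := ⟨finrank_euclideanSpace_fin⟩
  choose b hb0 hb1 using fun u : F => exists_opposite_orthonormalBases (hunit u u.2)
  choose σ hσ hcell using fun i : F × Bool =>
    exists_halfCell_eq_preimage_sector (b i.1 i.2) hunit hgap
  refine measure_le_of_forall_inter_le (c := fun i : F × Bool => halfCell F (b i.1 i.2))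
    (fun i => ?_) (pairwise_disjoint_halfCell hb0 hb1) (ae_mem_iUnion_halfCell hne hb0 hb1)
    fun i => ?_
  · rw [hcell]
    exact (planeCoords _).measurable (isOpen_sector _).measurableSet
  · rw [hcell]
    exact volume_polarBody_diff_inter_sector_le (by rw [hb0]; exact (hF i.1.2).1) (hσ i)

/-- Theorem B (Löwner case): if B² is the Löwner ellipse of the o-symmetric convex body K,
then V(K) + V(K*) ≤ 2π. -/
theorem area_sum_bound_loewner
    (K : Set E2) (hKcomp : IsCompact K) (hKconv : Convex ℝ K)
    (hKint : (interior K).Nonempty) (hsym : K = -K)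
    (hKB : K ⊆ Metric.closedBall (0 : E2) 1)
    (hLoewner : ∀ T : E2 →ₗ[ℝ] E2, Function.Bijective T →
      K ⊆ ⇑T '' Metric.closedBall (0 : E2) 1 → 1 ≤ |LinearMap.det T|) :
    volume K + volume (polarBody K) ≤ ENNReal.ofReal (2 * π) := by
  have hL : IsLoewnerBall K := ⟨hKB, hLoewner⟩
  obtain ⟨F, hF, hgap⟩ := hL.exists_finset_norm_le_sqrt_mul_inner hKcomp hsym
  have hdiff := volume_polarBody_diff_closedBall_le hF (by simpa using hgap)
  set B : Set E2 := Metric.closedBall 0 1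
  have hK : volume K = volume (interior K) :=
    (measure_congr (interior_ae_eq_of_null_frontier (hKconv.addHaar_frontier volume))).symm
  calc volume K + volume (polarBody K)
      ≤ volume (interior K) + (volume B + volume (polarBody K \ B)) := by
        rw [hK]
        gcongr
        exact (measure_le_inter_add_sdiff _ _ B).trans (by gcongr; exact inter_subset_right)
    _ ≤ volume (interior K) + (volume B + volume (B \ interior K)) := by gcongr
    _ = volume B + volume B := by
        rw [add_left_comm, measure_add_sdiff isOpen_interior.measurableSet.nullMeasurableSet,
          union_eq_self_of_subset_left (interior_subset.trans hKB)]
    _ = ENNReal.ofReal (2 * π) := by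
        rw [EuclideanSpace.volume_closedBall_fin_two, two_mul,
          ENNReal.ofReal_add pi_pos.le pi_pos.le]
        simp
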